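/- Let v ↦ H_v be a 2-acyclic region representation of a graph G over a graph H. If X is an inclusion-minimal vertex-subset of G such that H_X = ⋃_{x∈X} H_x contains a cycle, then G[X] is an induced cycle. -/

import Mathlib

open SimpleGraph

/-- A region representation of `G` over `H`: each vertex gets a nonempty connected
subgraph (region) of `H`, and two distinct vertices are adjacent in `G` iff their
regions share a vertex. -/
def IsRegionRep {V W : Type*} (G : SimpleGraph V) (H : SimpleGraph W)
    (f : V → H.Subgraph) : Prop :=
  (∀ v, (f v).Connected) ∧
  ∀ u v : V, u ≠ v → (G.Adj u v ↔ ((f u).verts ∩ (f v).verts).Nonempty)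

/-- The representation is `r`-acyclic: the union of the regions of any at most `r`
vertices is acyclic. -/
def RepAcyclic {V W : Type*} (H : SimpleGraph W) (f : V → H.Subgraph) (r : ℕ) : Prop :=
  ∀ X : Finset V, X.card ≤ r → (⨆ x ∈ X, f x).coe.IsAcyclic
/-- `G[X]` is an induced cycle of length `n`: there is a cycle in `G` with support
exactly `X` such that every edge of `G` between vertices of `X` is an edge of the cycle. -/
def IsInducedCycleOn {V : Type*} (G : SimpleGraph V) (X : Set V) (n : ℕ) : Prop :=
  ∃ (v : V) (w : G.Walk v v), w.IsCycle ∧ w.length = n ∧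
    {x | x ∈ w.support} = X ∧
    ∀ a b, a ∈ X → b ∈ X → G.Adj a b → w.toSubgraph.Adj a b

/-- Union of the regions indexed by `Y`, as a graph on all of `W`. -/
def regU {V W : Type*} {H : SimpleGraph W} (f : V → H.Subgraph) (Y : Set V) : SimpleGraph W where
  Adj a b := ∃ y ∈ Y, (f y).Adj a b
  symm := ⟨fun _ _ ⟨y, hy, h⟩ => ⟨y, hy, h.symm⟩⟩
  loopless := ⟨fun a ⟨_, _, h⟩ => H.loopless.irrefl a h.adj_sub⟩

lemma regU_mono {V W : Type*} {H : SimpleGraph W} (f : V → H.Subgraph) {Y Z : Set V}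
    (h : Y ⊆ Z) : regU f Y ≤ regU f Z := by
  intro a b ⟨y, hy, hab⟩
  exact ⟨y, h hy, hab⟩

lemma spanningCoe_acyclic {W : Type*} {H : SimpleGraph W} (S : H.Subgraph)
    (h : S.coe.IsAcyclic) : S.spanningCoe.IsAcyclic := by
  rw [isAcyclic_iff_forall_adj_isBridge] at h ⊢
  intro u v huv
  have huv' : S.Adj u v := huv
  have hb := h (v := ⟨u, huv'.fst_mem⟩) (w := ⟨v, huv'.snd_mem⟩) huv'
  rw [isBridge_iff] at hb ⊢
  rintro ⟨p⟩
  apply hb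
  have key : ∀ a b : W, (S.spanningCoe.deleteEdges {s(u, v)}).Walk a b → ∀ ha : a ∈ S.verts,
      ∃ hb : b ∈ S.verts,
        (S.coe.deleteEdges {s(⟨u, huv'.fst_mem⟩, ⟨v, huv'.snd_mem⟩)}).Reachable ⟨a, ha⟩ ⟨b, hb⟩ := by
    intro a b p
    induction p with
    | nil => intro ha; exact ⟨ha, Reachable.refl _⟩
    | @cons a c b hac p ih =>
      intro ha
      rw [deleteEdges_adj] at hac
      have hac' : S.Adj a c := hac.1
      obtain ⟨hb, hr⟩ := ih hac'.snd_mem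
      refine ⟨hb, Reachable.trans (Adj.reachable ?_) hr⟩
      rw [deleteEdges_adj]
      refine ⟨hac', ?_⟩
      have := hac.2
      simpa [Subtype.ext_iff] using this
  exact (key u v p huv'.fst_mem).2

lemma regU_acyclic_iff {V W : Type*} {H : SimpleGraph W} (f : V → H.Subgraph) (Y : Set V) :
    (⨆ x ∈ Y, f x).coe.IsAcyclic ↔ (regU f Y).IsAcyclic := by
  have e : (⨆ x ∈ Y, f x).spanningCoe = regU f Y := by
    ext a b
    simp [regU, Subgraph.iSup_adj]
  constructor
  · intro h
    rw [← e]
    exact spanningCoe_acyclic _ h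
  · intro h
    rw [← e] at h
    exact h.comap ⟨Subtype.val, fun {a b} hab => hab⟩ Subtype.val_injective

lemma reg_reachable {W : Type*} {H : SimpleGraph W} (S : H.Subgraph) (h : S.Connected)
    {a b : W} (ha : a ∈ S.verts) (hb : b ∈ S.verts) : S.spanningCoe.Reachable a b :=
  (h.coe ⟨a, ha⟩ ⟨b, hb⟩).map ⟨Subtype.val, fun {_ _} hab => hab⟩

/-- Gluing of forests. -/
lemma glue {W : Type*} (A B : SimpleGraph W) (S : Set W) (hS : ∀ a b, B.Adj a b → a ∈ S)
    (hA : A.IsAcyclic) (hB : B.IsAcyclic)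
    (h : ∀ r ∈ S, ∀ s ∈ S, A.Reachable r s → (A ⊓ B).Reachable r s) : (A ⊔ B).IsAcyclic := by
  have side : ∀ u v, A.Adj u v →
      (∀ r ∈ S, ¬ (A.deleteEdges {s(u, v)}).Reachable u r) →
      ¬ ((A ⊔ B).deleteEdges {s(u, v)}).Reachable u v := by
    rintro u v huv hno ⟨p⟩
    have key : ∀ a b : W, ((A ⊔ B).deleteEdges {s(u, v)}).Walk a b →
        (A.deleteEdges {s(u, v)}).Reachable u a → (A.deleteEdges {s(u, v)}).Reachable u b := by
      intro a b p
      induction p with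
      | nil => exact id
      | @cons a c b hac p ih =>
        intro ha
        apply ih
        rw [deleteEdges_adj] at hac
        rcases hac.1 with h1 | h1
        · exact ha.trans (Adj.reachable (by rw [deleteEdges_adj]; exact ⟨h1, hac.2⟩))
        · exact absurd ha (hno a (hS _ _ h1))
    have hr := key u v p (Reachable.refl _)
    exact isBridge_iff.1 (isAcyclic_iff_forall_adj_isBridge.1 hA huv) hr
  have br : ∀ u v, A.Adj u v → ¬ B.Adj u v → (A ⊔ B).IsBridge s(u, v) := by
    intro u v huv hnB
    rw [isBridge_iff]
    by_cases h1 : ∀ r ∈ S, ¬ (A.deleteEdges {s(u, v)}).Reachable u r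
    · exact side u v huv h1
    by_cases h2 : ∀ r ∈ S, ¬ (A.deleteEdges {s(v, u)}).Reachable v r
    · have := side v u huv.symm h2
      rw [Sym2.eq_swap] at this
      exact fun h => this h.symm
    push Not at h1 h2
    obtain ⟨r, hr, hur⟩ := h1
    obtain ⟨s, hs, hvs⟩ := h2
    rw [Sym2.eq_swap] at hvs
    exfalso
    have hle := deleteEdges_le (G := A) {s(u, v)}
    have hrs := h r hr s hs (((hur.mono hle).symm.trans huv.reachable).trans (hvs.mono hle))
    have hle2 : A ⊓ B ≤ A.deleteEdges {s(u, v)} := by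
      intro a b hab
      rw [deleteEdges_adj]
      refine ⟨hab.1, ?_⟩
      intro he
      rcases Sym2.eq_iff.1 (Set.mem_singleton_iff.1 he) with ⟨rfl, rfl⟩ | ⟨rfl, rfl⟩
      · exact hnB hab.2
      · exact hnB hab.2.symm
    exact isBridge_iff.1 (isAcyclic_iff_forall_adj_isBridge.1 hA huv)
      ((hur.trans (hrs.mono hle2)).trans hvs.symm)
  intro v c hc
  have hcB : ∀ e ∈ c.edges, e ∈ B.edgeSet := by
    intro e he
    induction e with | h a b
    by_contra hn
    have hab : (A ⊔ B).Adj a b := c.edges_subset_edgeSet he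
    rcases hab with hab | hab
    · exact (br a b hab hn).notMem_edges_of_isCycle hc he
    · exact hn hab
  exact hB (c.transfer B hcB) (hc.transfer hcB)

/-- Two connections in an acyclic union give a connection in the intersection. -/
lemma reach_inf {W : Type*} (A B C : SimpleGraph W) (hA : A ≤ C) (hB : B ≤ C) (hC : C.IsAcyclic)
    {r s : W} (h1 : A.Reachable r s) (h2 : B.Reachable r s) : (A ⊓ B).Reachable r s := by
  classical
  obtain ⟨p, hp⟩ := h1.exists_isPath
  obtain ⟨q, hq⟩ := h2.exists_isPath
  have := hC.path_unique ⟨p.mapLe hA, hp.mapLe hA⟩ ⟨q.mapLe hB, hq.mapLe hB⟩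
  have heq : p.edges = q.edges := by
    have h3 : p.mapLe hA = q.mapLe hB := congrArg Subtype.val this
    rw [← Walk.edges_mapLe_eq_edges (p := p) hA, h3, Walk.edges_mapLe_eq_edges]
  refine ⟨p.transfer (A ⊓ B) ?_⟩
  intro e he
  rw [edgeSet_inf]
  exact ⟨p.edges_subset_edgeSet he, q.edges_subset_edgeSet (heq ▸ he)⟩

/-- `G` restricted to `Y`, on the same vertex type. -/
def restr {V : Type*} (G : SimpleGraph V) (Y : Set V) : SimpleGraph V where
  Adj a b := G.Adj a b ∧ a ∈ Y ∧ b ∈ Y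
  symm := ⟨fun _ _ ⟨h, ha, hb⟩ => ⟨h.symm, hb, ha⟩⟩
  loopless := ⟨fun a h => G.loopless.irrefl a h.1⟩

lemma restr_support {V : Type*} {G : SimpleGraph V} {Y : Set V} {y z : V}
    (p : (restr G Y).Walk y z) (hy : y ∈ Y) : ∀ a ∈ p.support, a ∈ Y := by
  induction p with
  | nil => simpa using hy
  | cons h p ih =>
    intro a ha
    rw [Walk.support_cons, List.mem_cons] at ha
    rcases ha with rfl | ha
    · exact hy
    · exact ih h.2.2 a ha

lemma restr_reachable {V W : Type*} {G : SimpleGraph V} {H : SimpleGraph W} {f : V → H.Subgraph}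
    (hrep : IsRegionRep G H f) {Y : Set V} {r s : W} (p : (regU f Y).Walk r s) :
    ∀ y ∈ Y, ∀ z ∈ Y, r ∈ (f y).verts → s ∈ (f z).verts → (restr G Y).Reachable y z := by
  have step : ∀ y ∈ Y, ∀ z ∈ Y, ∀ r, r ∈ (f y).verts → r ∈ (f z).verts →
      (restr G Y).Reachable y z := by
    intro y hy z hz r h1 h2
    by_cases hyz : y = z
    · subst hyz; exact Reachable.refl _
    · exact Adj.reachable ⟨(hrep.2 y z hyz).2 ⟨r, h1, h2⟩, hy, hz⟩
  induction p with
  | nil => intro y hy z hz h1 h2; exact step y hy z hz _ h1 h2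
  | cons h p ih =>
    intro y hy z hz h1 h2
    obtain ⟨x, hx, hax⟩ := h
    exact (step y hy x hx _ h1 hax.fst_mem).trans (ih x hx z hz hax.snd_mem h2)

lemma walk_reach {V W : Type*} {G : SimpleGraph V} {H : SimpleGraph W} {f : V → H.Subgraph}
    (hrep : IsRegionRep G H f) {y z : V} (p : G.Walk y z) :
    ∀ r ∈ (f y).verts, ∀ s ∈ (f z).verts, (regU f {a | a ∈ p.support}).Reachable r s := by
  have one : ∀ (Z : Set V), ∀ y ∈ Z, ∀ r ∈ (f y).verts, ∀ s ∈ (f y).verts,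
      (regU f Z).Reachable r s := by
    intro Z y hy r hr s hs
    exact (reg_reachable (f y) (hrep.1 y) hr hs).mono (fun a b hab => ⟨y, hy, hab⟩)
  induction p with
  | nil => intro r hr s hs; exact one _ _ (by simp) r hr s hs
  | @cons y x z h p ih =>
    intro r hr s hs
    obtain ⟨t, ht1, ht2⟩ := (hrep.2 y x h.ne).1 h
    refine (one _ y (by simp) r hr t ht1).trans ((ih t ht2 s hs).mono (regU_mono f ?_))
    intro a ha
    simp only [Set.mem_setOf_eq, Walk.support_cons, List.mem_cons] at ha ⊢
    exact Or.inr ha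

/-- Adjacent vertices on a shortest path are consecutive. -/
lemma geodesic_chord {V : Type*} {K : SimpleGraph V} {y z : V} (p : K.Walk y z)
    (hp : p.length = K.dist y z) {a b : V} (ha : a ∈ p.support) (hb : b ∈ p.support)
    (hab : K.Adj a b) : s(a, b) ∈ p.edges := by
  obtain ⟨i, rfl, hi⟩ := Walk.mem_support_iff_exists_getVert.1 ha
  obtain ⟨j, rfl, hj⟩ := Walk.mem_support_iff_exists_getVert.1 hb
  have aux : ∀ i j, i < j → j ≤ p.length → K.Adj (p.getVert i) (p.getVert j) → j = i + 1 := by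
    intro i j hij hj h
    have := dist_le ((p.take i).append (Walk.cons h (p.drop j)))
    rw [Walk.length_append, Walk.length_cons, Walk.take_length, Walk.drop_length] at this
    omega
  rw [Walk.mk_mem_edges_iff_exists]
  rcases lt_trichotomy i j with h | h | h
  · have := aux i j h hj hab
    subst this
    exact ⟨i, by omega, rfl⟩
  · subst h; exact absurd rfl hab.ne
  · have := aux j i h hi hab.symm
    subst this
    exact ⟨j, by omega, Sym2.eq_swap⟩

/-- for a 2-acyclic region representation, if `X` is inclusion-minimal
such that `H_X` contains a cycle, then `G[X]` is an induced cycle (of length ≥ 3). -/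
theorem stmt12 {V W : Type*} (G : SimpleGraph V) (H : SimpleGraph W) (f : V → H.Subgraph)
    (hrep : IsRegionRep G H f) (h2 : RepAcyclic H f 2) (X : Set V)
    (hmin : ¬ (⨆ x ∈ X, f x).coe.IsAcyclic ∧
      ∀ Y : Set V, Y ⊂ X → (⨆ x ∈ Y, f x).coe.IsAcyclic) :
    ∃ n, 3 ≤ n ∧ IsInducedCycleOn G X n := by
  classical
  obtain ⟨hcyc, hprop⟩ := hmin
  rw [regU_acyclic_iff] at hcyc
  simp only [regU_acyclic_iff] at hprop
  have hpair : ∀ a b : V, (regU f {a, b}).IsAcyclic := by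
    intro a b
    have := h2 {a, b} Finset.card_le_two
    have e : (⨆ x ∈ ({a, b} : Finset V), f x) = ⨆ x ∈ ({a, b} : Set V), f x := by
      simp [iSup_or, iSup_sup_eq]
    rw [e, regU_acyclic_iff] at this
    exact this
  have hXne : X.Nonempty := by
    rw [Set.nonempty_iff_ne_empty]
    rintro rfl
    apply hcyc
    have : regU f ∅ = ⊥ := by ext a b; simp [regU]
    rw [this]; exact isAcyclic_bot
  obtain ⟨x, hx⟩ := hXne
  set Y : Set V := X \ {x} with hY
  have hYX : Y ⊂ X := ⟨Set.diff_subset, fun h => (h hx).2 rfl⟩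
  have hxY : x ∉ Y := fun h => h.2 rfl
  have hBac : (f x).spanningCoe.IsAcyclic :=
    by
    refine IsAcyclic.anti (G' := regU f {x, x}) ?_ (hpair x x)
    intro a b h
    exact ⟨x, by simp, h⟩
  have hsup : regU f Y ⊔ (f x).spanningCoe = regU f X := by
    ext a b
    constructor
    · rintro (⟨y, hy, h⟩ | h)
      · exact ⟨y, hy.1, h⟩
      · exact ⟨x, hx, h⟩
    · rintro ⟨y, hy, h⟩
      by_cases hyx : y = x
      · subst hyx; exact Or.inr h
      · exact Or.inl ⟨y, ⟨hy, hyx⟩, h⟩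
  obtain ⟨r, hr, s, hs, hrs, hnrs⟩ : ∃ r ∈ (f x).verts, ∃ s ∈ (f x).verts,
      (regU f Y).Reachable r s ∧ ¬ (regU f Y ⊓ (f x).spanningCoe).Reachable r s := by
    by_contra hcon
    push Not at hcon
    apply hcyc
    rw [← hsup]
    exact glue _ _ (f x).verts (fun a b h => Subgraph.Adj.fst_mem h) (hprop Y hYX) hBac hcon
  -- covering property
  have cover : ∀ (y z : V) (p : G.Walk y z), (∀ a ∈ p.support, a ∈ Y) →
      ∀ r ∈ (f x).verts, ∀ s ∈ (f x).verts, r ∈ (f y).verts → s ∈ (f z).verts →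
      ¬ (regU f Y ⊓ (f x).spanningCoe).Reachable r s → ∀ a ∈ Y, a ∈ p.support := by
    intro y z p hp r hr s hs hry hsz hn a ha
    by_contra hap
    apply hn
    have hsub : insert x {a | a ∈ p.support} ⊂ X := by
      refine ⟨?_, fun h => ?_⟩
      · rintro b (rfl | hb)
        · exact hx
        · exact (hp b hb).1
      · rcases h ha.1 with h | h
        · exact ha.2 h
        · exact hap h
    have hac := hprop _ hsub
    refine (reach_inf (regU f {a | a ∈ p.support}) (f x).spanningCoe _
      (regU_mono f (Set.subset_insert _ _)) (fun a b h => ⟨x, Set.mem_insert _ _, h⟩) hac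
      (walk_reach hrep p r hry s hsz) (reg_reachable _ (hrep.1 x) hr hs)).mono ?_
    exact inf_le_inf_right _ (regU_mono f hp)
  have hne : r ≠ s := by rintro rfl; exact hnrs (Reachable.refl _)
  have fst : ∀ r s : W, r ≠ s → (regU f Y).Reachable r s → ∃ y ∈ Y, r ∈ (f y).verts := by
    rintro r s hne ⟨p⟩
    cases p with
    | nil => exact absurd rfl hne
    | cons h p => obtain ⟨y, hy, h⟩ := h; exact ⟨y, hy, h.fst_mem⟩
  obtain ⟨y, hy, hry⟩ := fst r s hne hrs
  obtain ⟨z, hz, hsz⟩ := fst s r hne.symm hrs.symm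
  have hGyz : (restr G Y).Reachable y z :=
    hrs.elim fun p => restr_reachable hrep p y hy z hz hry hsz
  obtain ⟨p', hp'⟩ := hGyz.exists_walk_length_eq_dist
  have hp'path := p'.isPath_of_length_eq_dist hp'
  have hle : restr G Y ≤ G := fun a b h => h.1
  obtain ⟨p, hpath, hpY, hchord⟩ : ∃ p : G.Walk y z, p.IsPath ∧ (∀ a ∈ p.support, a ∈ Y) ∧
      ∀ a ∈ p.support, ∀ b ∈ p.support, G.Adj a b → s(a, b) ∈ p.edges := by
    refine ⟨p'.mapLe hle, hp'path.mapLe hle, ?_, ?_⟩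
    · rw [Walk.support_mapLe_eq_support]; exact restr_support p' hy
    · rw [Walk.support_mapLe_eq_support, Walk.edges_mapLe_eq_edges]
      intro a ha b hb hab
      exact geodesic_chord p' hp' ha hb
        ⟨hab, restr_support p' hy a ha, restr_support p' hy b hb⟩
  have hcov := cover y z p hpY r hr s hs hry hsz hnrs
  have hxy : x ≠ y := fun h => hxY (h ▸ hy)
  have hxz : x ≠ z := fun h => hxY (h ▸ hz)
  have hxp : x ∉ p.support := fun h => hxY (hpY x h)
  have hyz : y ≠ z := by
    rintro rfl
    have hnil : p = Walk.nil := Walk.isPath_iff_eq_nil.1 hpath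
    subst hnil
    apply hcyc
    refine (hpair x y).anti (regU_mono f ?_)
    intro a ha
    by_cases hax : a = x
    · exact Or.inl hax
    · have := hcov a ⟨ha, hax⟩
      right
      simpa using this
  have hAxy : G.Adj x y := (hrep.2 x y hxy).2 ⟨r, hr, hry⟩
  have hAzx : G.Adj z x := (hrep.2 z x hxz.symm).2 ⟨s, hsz, hs⟩
  have hwc : (Walk.cons hAxy (p.concat hAzx)).IsCycle := by
    rw [Walk.cons_isCycle_iff]
    refine ⟨hpath.concat hxp hAzx, ?_⟩
    rw [Walk.edges_concat, List.concat_eq_append, List.mem_append, List.mem_singleton]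
    rintro (h | h)
    · exact hxp (p.fst_mem_support_of_mem_edges h)
    · rcases Sym2.eq_iff.1 h with ⟨h, -⟩ | ⟨-, h⟩
      · exact hxz h
      · exact hyz h
  have hxchord : ∀ b ∈ p.support, G.Adj x b → b = y ∨ b = z := by
    intro b hb hxb
    by_contra hcon
    push Not at hcon
    obtain ⟨t, htx, htb⟩ := (hrep.2 x b hxb.ne).1 hxb
    by_cases hrt : (regU f Y ⊓ (f x).spanningCoe).Reachable r t
    · have hst : ¬ (regU f Y ⊓ (f x).spanningCoe).Reachable s t :=
        fun h => hnrs (hrt.trans h.symm)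
      have hb' : b ∈ p.reverse.support := by simpa using hb
      have := cover z b (p.reverse.takeUntil b hb')
        (fun a ha => hpY a (by
          have := p.reverse.support_takeUntil_subset_support hb' ha
          simpa using this)) s hs t htx hsz htb hst y hy
      exact Walk.endpoint_notMem_support_takeUntil hpath.reverse hb' hcon.1.symm this
    · have := cover y b (p.takeUntil b hb)
        (fun a ha => hpY a (p.support_takeUntil_subset_support hb ha)) r hr t htx hry htb hrt z hz
      exact Walk.endpoint_notMem_support_takeUntil hpath hb hcon.2.symm this
  have hXp : ∀ a ∈ X, a = x ∨ a ∈ p.support := by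
    intro a ha
    by_cases hax : a = x
    · exact Or.inl hax
    · exact Or.inr (hcov a ⟨ha, hax⟩)
  have hxe : ∀ b ∈ X, G.Adj x b → s(x, b) ∈ (Walk.cons hAxy (p.concat hAzx)).edges := by
    intro b hb hxb
    have hbp := (hXp b hb).resolve_left hxb.ne.symm
    rcases hxchord b hbp hxb with rfl | rfl
    · simp
    · simp [Walk.edges_concat, Sym2.eq_swap]
  refine ⟨_, hwc.three_le_length, x, _, hwc, rfl, ?_, ?_⟩
  · ext a
    simp only [Set.mem_setOf_eq, Walk.support_cons, Walk.support_concat, List.concat_eq_append,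
      List.mem_cons, List.mem_append, List.not_mem_nil, or_false]
    constructor
    · rintro (rfl | h | rfl)
      · exact hx
      · exact (hpY a h).1
      · exact hx
    · intro ha
      rcases hXp a ha with h | h
      · exact Or.inl h
      · exact Or.inr (Or.inl h)
  · intro a b ha hb hab
    rw [Walk.adj_toSubgraph_iff_mem_edges]
    rcases hXp a ha with rfl | hap
    · exact hxe b hb hab
    rcases hXp b hb with rfl | hbp
    · rw [Sym2.eq_swap]; exact hxe a ha hab.symm
    · have := hchord a hap b hbp hab
      simp [Walk.edges_concat, this]
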